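/- Let L be a Lie algebra over a commutative ring, let n ≥ 1 and let z₁, …, zₙ ∈ L. Let Φ' : ℤ[Sₙ] → L be the ℤ-linear map determined on permutations by Φ'(σ) = ⁅z_{σ(1)}, ⁅z_{σ(2)}, …, ⁅z_{σ(n−1)}, z_{σ(n)}⁆ … ⁆⁆ (iterated Lie bracket). Then Φ'(eₙ) = n • ⁅z₁, ⁅z₂, …, ⁅z_{n−1}, zₙ⁆ … ⁆⁆. -/

import Mathlib

open Equiv

/-- The `k`-cycle `τ_k = (n−k+1, n−k+2, …, n)` in the symmetric group on
`{1, …, n}` (realized `0`-based as a permutation of `Fin n`): it sends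
`n−k+1 ↦ n−k+2, …, n−1 ↦ n, n ↦ n−k+1` and fixes all other points.
(For `k − 1 ≥ n` we set it to `1` by convention.) -/
def tauCycle (n k : ℕ) : Perm (Fin n) :=
  if h : k - 1 < n then
    Fin.revPerm * (Fin.cycleRange (⟨k - 1, h⟩ : Fin n))⁻¹ * Fin.revPerm
  else 1

/-- The Dynkin element `eₙ = (1 − τ₂)(1 − τ₃)⋯(1 − τₙ)` of the integral group
ring `ℤ[Sₙ]`, with `e₁ = 1`. -/
noncomputable def dynkinElement (n : ℕ) : MonoidAlgebra ℤ (Perm (Fin n)) :=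
  ((List.range (n - 1)).map fun j =>
    (1 : MonoidAlgebra ℤ (Perm (Fin n)))
      - MonoidAlgebra.of ℤ (Perm (Fin n)) (tauCycle n (j + 2))).prod

/-- The iterated (left-normed from the right) Lie bracket
`⁅x₁, ⁅x₂, …, ⁅x_{m−1}, x_m⁆ … ⁆⁆` of a list `[x₁, …, x_m]`. -/
def listLieBracket {L : Type*} [LieRing L] : List L → L
  | [] => 0
  | [x] => x
  | x :: y :: l => ⁅x, listLieBracket (y :: l)⁆

/-! The right-normed bracket of `z₁, …, zₙ` is a matrix coefficient: with
`W m x (v, t) = (⁅x, v⁆ + t • m • x, 0)` on `L × R`, one has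
`W 1 z₁ (⋯ (W 1 zₙ (0, 1))) = (⁅z₁, ⁅z₂, …⁆⁆, 0)`. It therefore suffices to know what `eₙ` does to
products in an associative ring. There, `eₙ₊₁` is `eₙ` acting on the last `n` letters, times
`1 - τₙ₊₁`, and `τₙ₊₁` moves the first letter to the end; so by induction `eₙ` turns a product
into the iterated commutator of its factors. Since `⁅W m x, W k y⁆ = W (m + k) ⁅x, y⁆`, the
iterated commutator of the `W 1 zᵢ` is `W n ⁅z₁, ⁅z₂, …⁆⁆`, which sends `(0, 1)` to `n` times the
bracket. -/

section ListLieBracket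

variable {L : Type*} [LieRing L]

theorem listLieBracket_cons (x : L) {l : List L} (hl : l ≠ []) :
    listLieBracket (x :: l) = ⁅x, listLieBracket l⁆ := by
  cases l with
  | nil => contradiction
  | cons y l => rfl

theorem listLieBracket_ofFn_add_two {n : ℕ} (a : Fin (n + 2) → L) :
    listLieBracket (List.ofFn a) = ⁅a 0, listLieBracket (List.ofFn (Fin.tail a))⁆ := by
  rw [List.ofFn_succ, listLieBracket_cons _ (by simp)]
  rfl

end ListLieBracket

section TauCycle

theorem cycleRange_castSucc {n : ℕ} (c i : Fin n) :
    c.castSucc.cycleRange i.castSucc = (c.cycleRange i).castSucc := by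
  ext
  rcases le_or_gt i c with h | h
  · simp [Fin.coe_cycleRange_of_le h, Fin.coe_cycleRange_of_le (Fin.castSucc_le_castSucc_iff.2 h)]
  · rw [Fin.cycleRange_of_gt h, Fin.cycleRange_of_gt (Fin.castSucc_lt_castSucc_iff.2 h)]

theorem cycleRange_inv_castSucc {n : ℕ} (c i : Fin n) :
    (c.castSucc.cycleRange)⁻¹ i.castSucc = (c.cycleRange⁻¹ i).castSucc := by
  rw [Perm.inv_eq_iff_eq, cycleRange_castSucc, ← Perm.mul_apply, mul_inv_cancel, Perm.one_apply]

theorem tauCycle_self (n : ℕ) : tauCycle (n + 1) (n + 1) = finRotate (n + 1) := by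
  have hτ : tauCycle (n + 1) (n + 1) = Fin.revPerm * (finRotate (n + 1))⁻¹ * Fin.revPerm := by
    rw [← Fin.cycleRange_last]
    exact dif_pos n.lt_succ_self
  ext i : 1
  rw [hτ, Perm.mul_apply, Perm.mul_apply, Fin.revPerm_apply, Fin.revPerm_apply, Fin.rev_eq_iff,
    Perm.inv_eq_iff_eq, finRotate_apply, finRotate_apply, Fin.rev_add, sub_add_cancel]

/-- The embedding of the permutations of `n` points into those of `n + 1` points with image
the stabilizer of the first point: `i + 1` is sent to `σ i + 1` and `0` is fixed. -/
noncomputable def permSuccHom (n : ℕ) : Perm (Fin n) →* Perm (Fin (n + 1)) :=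
  Perm.viaEmbeddingHom (Fin.succEmb n)

theorem permSuccHom_succ {n : ℕ} (σ : Perm (Fin n)) (i : Fin n) :
    permSuccHom n σ i.succ = (σ i).succ :=
  Perm.viaEmbedding_apply σ (Fin.succEmb n) i

theorem permSuccHom_zero {n : ℕ} (σ : Perm (Fin n)) : permSuccHom n σ 0 = 0 :=
  Perm.viaEmbedding_apply_of_notMem σ (Fin.succEmb n) 0 (by simp)

theorem permSuccHom_tauCycle {n k : ℕ} (hk : k - 1 < n) :
    permSuccHom n (tauCycle n k) = tauCycle (n + 1) k := by
  have hτ : tauCycle (n + 1) k = Fin.revPerm *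
      (Fin.cycleRange (Fin.castSucc ⟨k - 1, hk⟩))⁻¹ * Fin.revPerm :=
    dif_pos (hk.trans n.lt_succ_self)
  ext i : 1
  cases i using Fin.cases with
  | zero =>
    rw [permSuccHom_zero, hτ, Perm.mul_apply, Perm.mul_apply, Fin.revPerm_apply, Fin.revPerm_apply,
      eq_comm, Fin.rev_eq_iff, Perm.inv_eq_iff_eq, Fin.rev_zero,
      Fin.cycleRange_of_gt (Fin.castSucc_lt_last _)]
  | succ i =>
    rw [permSuccHom_succ, hτ, tauCycle, dif_pos hk]
    simp only [Perm.mul_apply, Fin.revPerm_apply, Fin.rev_succ, cycleRange_inv_castSucc,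
      Fin.rev_castSucc]

end TauCycle

section DynkinElement

theorem mapDomainRingHom_of {R M N : Type*} [Semiring R] [Monoid M] [Monoid N] (f : M →* N)
    (m : M) :
    MonoidAlgebra.mapDomainRingHom R f (MonoidAlgebra.of R M m) = MonoidAlgebra.of R N (f m) := by
  simp only [MonoidAlgebra.of_apply, MonoidAlgebra.mapDomainRingHom_apply,
    MonoidAlgebra.mapDomain_single]

theorem dynkinElement_one : dynkinElement 1 = 1 := rfl

theorem dynkinElement_add_two (n : ℕ) :
    dynkinElement (n + 2) =
      MonoidAlgebra.mapDomainRingHom ℤ (permSuccHom (n + 1)) (dynkinElement (n + 1)) *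
        (1 - MonoidAlgebra.of ℤ _ (finRotate (n + 2))) := by
  have hfactor : ∀ j ∈ List.range n,
      MonoidAlgebra.mapDomainRingHom ℤ (permSuccHom (n + 1))
          (1 - MonoidAlgebra.of ℤ _ (tauCycle (n + 1) (j + 2))) =
        1 - MonoidAlgebra.of ℤ _ (tauCycle (n + 2) (j + 2)) := by
    intro j hj
    have hj : j + 2 - 1 < n + 1 := by simpa using hj
    rw [map_sub, map_one, mapDomainRingHom_of, permSuccHom_tauCycle hj]
  rw [dynkinElement, dynkinElement, map_list_prod, List.map_map, Nat.add_sub_cancel,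
    ← tauCycle_self, show n + 2 - 1 = n + 1 from rfl, List.prod_range_succ]
  congr 2
  exact (List.map_congr_left hfactor).symm

end DynkinElement

section AssociativeRing

attribute [local instance] LieRing.ofAssociativeRing

variable {A : Type*} [Ring A]

/-- The `ℤ`-linear map `ℤ[Sₙ] → A` sending a permutation `σ` to the permuted product
`a (σ 0) * a (σ 1) * ⋯` of a finite sequence of ring elements. -/
noncomputable def permutedProd {n : ℕ} (a : Fin n → A) :
    MonoidAlgebra ℤ (Perm (Fin n)) →ₗ[ℤ] A :=
  Finsupp.linearCombination ℤ (fun σ : Perm (Fin n) => (List.ofFn (a ∘ σ)).prod) ∘ₗ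
    (MonoidAlgebra.coeffLinearEquiv ℤ).toLinearMap

theorem permutedProd_of {n : ℕ} (a : Fin n → A) (σ : Perm (Fin n)) :
    permutedProd a (MonoidAlgebra.of ℤ _ σ) = (List.ofFn (a ∘ σ)).prod := by
  simp [permutedProd]

theorem permutedProd_mapDomain_permSuccHom {n : ℕ} (a : Fin (n + 1) → A)
    (u : MonoidAlgebra ℤ (Perm (Fin n))) :
    permutedProd a (MonoidAlgebra.mapDomainRingHom ℤ (permSuccHom n) u) =
      a 0 * permutedProd (Fin.tail a) u := by
  induction u using MonoidAlgebra.induction_on with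
  | of σ =>
    rw [mapDomainRingHom_of, permutedProd_of, permutedProd_of, List.ofFn_succ, List.prod_cons]
    simp only [Function.comp_def, permSuccHom_zero, permSuccHom_succ, Fin.tail]
  | add u v hu hv => rw [map_add, map_add, map_add, hu, hv, mul_add]
  | smul r u hu => rw [map_zsmul, map_zsmul, map_zsmul, hu, mul_smul_comm]

theorem permutedProd_mapDomain_permSuccHom_mul_finRotate {n : ℕ} (a : Fin (n + 1) → A)
    (u : MonoidAlgebra ℤ (Perm (Fin n))) :
    permutedProd a (MonoidAlgebra.mapDomainRingHom ℤ (permSuccHom n) u *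
        MonoidAlgebra.of ℤ _ (finRotate (n + 1))) =
      permutedProd (Fin.tail a) u * a 0 := by
  induction u using MonoidAlgebra.induction_on with
  | of σ =>
    rw [mapDomainRingHom_of, ← map_mul, permutedProd_of, permutedProd_of, List.ofFn_succ',
      List.prod_concat, Function.comp_apply, Perm.mul_apply, finRotate_last, permSuccHom_zero]
    simp only [Function.comp_def, Perm.mul_apply, finRotate_apply, Fin.coeSucc_eq_succ,
      permSuccHom_succ, Fin.tail]
  | add u v hu hv => rw [map_add, add_mul, map_add, map_add, hu, hv, add_mul]
  | smul r u hu => rw [map_zsmul, smul_mul_assoc, map_zsmul, map_zsmul, hu, smul_mul_assoc]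

theorem permutedProd_dynkinElement {n : ℕ} (a : Fin (n + 1) → A) :
    permutedProd a (dynkinElement (n + 1)) = listLieBracket (List.ofFn a) := by
  induction n with
  | zero =>
    rw [dynkinElement_one, ← map_one (MonoidAlgebra.of ℤ _), permutedProd_of]
    simp [listLieBracket]
  | succ n ih =>
    rw [dynkinElement_add_two, mul_sub, mul_one, map_sub, permutedProd_mapDomain_permSuccHom,
      permutedProd_mapDomain_permSuccHom_mul_finRotate, ih, listLieBracket_ofFn_add_two,
      Ring.lie_def]

end AssociativeRing

section WeightedAd

attribute [local instance] LieRing.ofAssociativeRing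

variable {R L : Type*} [CommRing R] [LieRing L] [LieAlgebra R L]

/-- The endomorphism of `L × R` with block matrix `!![ad x, m • x; 0, 0]`: the adjoint action of an
element `x` of weight `m` on the extension of `L` by minus the degree derivation, the latter
spanning the factor `R`. -/
def weightedAd (m : R) (x : L) : Module.End R (L × R) :=
  LinearMap.inl R L R ∘ₗ
    (LieAlgebra.ad R L x).coprod (LinearMap.toSpanSingleton R L (m • x))

theorem weightedAd_apply (m : R) (x : L) (p : L × R) :
    weightedAd m x p = (⁅x, p.1⁆ + p.2 • m • x, 0) := by
  simp [weightedAd]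

theorem lie_weightedAd (m k : R) (x y : L) :
    ⁅weightedAd m x, weightedAd k y⁆ = weightedAd (m + k) ⁅x, y⁆ := by
  refine LinearMap.ext fun ⟨v, t⟩ => ?_
  have hweight : t • k • ⁅x, y⁆ - t • m • ⁅y, x⁆ = t • (m + k) • ⁅x, y⁆ := by
    rw [← lie_skew x y]
    module
  simp only [Ring.lie_def, LinearMap.sub_apply, Module.End.mul_apply, weightedAd_apply, zero_smul,
    add_zero, lie_add, lie_smul, Prod.mk_sub_mk, sub_zero, lie_lie, ← hweight]
  congr 1
  abel

theorem listLieBracket_map_weightedAd_one (l : List L) :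
    listLieBracket (l.map (weightedAd (1 : R))) =
      weightedAd (l.length : R) (listLieBracket l) := by
  induction l with
  | nil => exact LinearMap.ext fun p => by simp [listLieBracket, weightedAd_apply, Prod.zero_eq_mk]
  | cons x l ih =>
    rcases eq_or_ne l [] with rfl | h
    · simp [listLieBracket]
    · rw [List.map_cons, listLieBracket_cons _ (by simpa using h), listLieBracket_cons _ h, ih,
        lie_weightedAd, List.length_cons, Nat.cast_succ, add_comm]

theorem prod_map_weightedAd_one_apply {l : List L} (hl : l ≠ []) :
    (l.map (weightedAd (1 : R))).prod (0, 1) = (listLieBracket l, 0) := by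
  induction l with
  | nil => contradiction
  | cons x l ih =>
    rcases eq_or_ne l [] with rfl | h
    · simp [listLieBracket, weightedAd_apply]
    · rw [List.map_cons, List.prod_cons, Module.End.mul_apply, ih h, weightedAd_apply,
        listLieBracket_cons _ h, zero_smul, add_zero]

end WeightedAd

/-- Dynkin's quasi-idempotence: for elements `z₁, …, zₙ` of a Lie algebra `L`
over a commutative ring, if `Φ' : ℤ[Sₙ] → L` is the ℤ-linear map with
`Φ'(σ) = ⁅z_{σ(1)}, ⁅z_{σ(2)}, …, ⁅z_{σ(n−1)}, z_{σ(n)}⁆ … ⁆⁆`, then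
`Φ'(eₙ) = n • ⁅z₁, ⁅z₂, …, ⁅z_{n−1}, zₙ⁆ … ⁆⁆`. -/
theorem dynkinElement_iterated_bracket
    {R L : Type*} [CommRing R] [LieRing L] [LieAlgebra R L]
    {n : ℕ} (hn : 1 ≤ n) (z : Fin n → L)
    (Φ' : MonoidAlgebra ℤ (Perm (Fin n)) →ₗ[ℤ] L)
    (hΦ' : ∀ σ : Perm (Fin n),
      Φ' (MonoidAlgebra.of ℤ (Perm (Fin n)) σ) = listLieBracket (List.ofFn fun i => z (σ i))) :
    Φ' (dynkinElement n) = n • listLieBracket (List.ofFn z) := by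
  obtain ⟨m, rfl⟩ := Nat.exists_eq_add_of_le' hn
  let W : L → Module.End R (L × R) := weightedAd 1
  have hcoeff : ∀ u, Φ' u = (permutedProd (W ∘ z) u (0, 1)).1 := by
    intro u
    induction u using MonoidAlgebra.induction_on with
    | of σ =>
      rw [hΦ', permutedProd_of, Function.comp_assoc, ← List.map_ofFn,
        prod_map_weightedAd_one_apply (by simp)]
      rfl
    | add u v hu hv => rw [map_add, map_add, hu, hv, LinearMap.add_apply, Prod.fst_add]
    | smul r u hu => rw [map_zsmul, map_zsmul, hu, LinearMap.smul_apply, Prod.smul_fst]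
  rw [hcoeff, permutedProd_dynkinElement, ← List.map_ofFn,
    listLieBracket_map_weightedAd_one, weightedAd_apply, List.length_ofFn]
  simp only [lie_zero, zero_add, one_smul, Nat.cast_smul_eq_nsmul]
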